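/- arXiv:1704.05321 — 7 statements merged into one kernel-verified Lean document; each statement's English description precedes it below -/
import Mathlib

section
/- For every n×n pairwise comparison matrix A (n ≥ 2), the weight vector w defined by w_i = (∏_{j=1}^n a_{i,j})^{1/n} / Σ_{k=1}^n (∏_{j=1}^n a_{k,j})^{1/n} is the unique minimizer, among all weight vectors, of the objective Σ_{i=1}^n Σ_{j=1}^n ( log a_{i,j} − log(w_i/w_j) )². -/
open Finset

/-- A pairwise comparison matrix: all entries positive, reciprocal. -/
def IsPCM {n : ℕ} (A : Matrix (Fin n) (Fin n) ℝ) : Prop :=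
  (∀ i j, 0 < A i j) ∧ (∀ i j, A j i = 1 / A i j)

/-- Consistency of a pairwise comparison matrix. -/
def IsConsistent {n : ℕ} (A : Matrix (Fin n) (Fin n) ℝ) : Prop :=
  ∀ i j k, A i k = A i j * A j k

/-- The LLSM (row geometric mean) weight vector. -/
noncomputable def llsm {n : ℕ} (A : Matrix (Fin n) (Fin n) ℝ) : Fin n → ℝ :=
  fun i => (∏ j, A i j) ^ ((1 : ℝ) / n) / ∑ k, (∏ j, A k j) ^ ((1 : ℝ) / n)

/-- `Ahat` is obtained from `A` by an α-transformation on the triad `(i,j,k)`. -/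
def TriadTransform {n : ℕ} (A Ahat : Matrix (Fin n) (Fin n) ℝ)
    (i j k : Fin n) (α : ℝ) : Prop :=
  i ≠ j ∧ j ≠ k ∧ i ≠ k ∧ 0 < α ∧
  Ahat i j = α * A i j ∧ Ahat j i = A j i / α ∧
  Ahat j k = α * A j k ∧ Ahat k j = A k j / α ∧
  Ahat k i = α * A k i ∧ Ahat i k = A i k / α ∧
  ∀ l m : Fin n,
    (l, m) ≠ (i, j) → (l, m) ≠ (j, i) → (l, m) ≠ (j, k) → (l, m) ≠ (k, j) →
    (l, m) ≠ (k, i) → (l, m) ≠ (i, k) → Ahat l m = A l m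

/-!
After taking logarithms, weights `w` are fitted to `A` by an ordinary least squares problem: the
skew-symmetric array `b i j = log (A i j)` is approximated by differences `x i - x j`, where
`x i = log (w i)`. The row means of `b` leave a residual whose rows and columns sum to zero, so that
it is orthogonal to every array of differences, and Pythagoras' theorem makes any other choice of
differences strictly worse. Exponentiating row means gives row geometric means, and a weight vector
is determined by its ratios because its entries sum to `1`.
-/

open scoped BigOperators

section LeastSquares

variable {ι : Type*} [Fintype ι]

theorem sum_sum_sq_sub_sub {κ R : Type*} [Fintype κ] [CommRing R] {e : ι → κ → R}
    (hrow : ∀ i, ∑ j, e i j = 0) (hcol : ∀ j, ∑ i, e i j = 0) (u : ι → R) (v : κ → R) :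
    ∑ i, ∑ j, (e i j - (u i - v j)) ^ 2 =
      ∑ i, ∑ j, e i j ^ 2 + ∑ i, ∑ j, (u i - v j) ^ 2 := by
  have hu : ∑ i, ∑ j, e i j * u i = 0 := by
    simp only [← sum_mul, hrow, zero_mul, sum_const_zero]
  have hv : ∑ i, ∑ j, e i j * v j = 0 := by
    rw [sum_comm]
    simp only [← sum_mul, hcol, zero_mul, sum_const_zero]
  calc ∑ i, ∑ j, (e i j - (u i - v j)) ^ 2
    _ = ∑ i, ∑ j, (e i j ^ 2 + (u i - v j) ^ 2 - 2 * (e i j * u i) + 2 * (e i j * v j)) :=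
        sum_congr rfl fun i _ ↦ sum_congr rfl fun j _ ↦ by ring
    _ = ∑ i, ∑ j, e i j ^ 2 + ∑ i, ∑ j, (u i - v j) ^ 2 := by
        simp only [sum_add_distrib, sum_sub_distrib, ← mul_sum, hu, hv, mul_zero, sub_zero,
          add_zero]

theorem sum_sum_sq_sub_pos {K : Type*} [Ring K] [LinearOrder K] [IsStrictOrderedRing K]
    {d : ι → K} (hd : ∃ i j, d i ≠ d j) : 0 < ∑ i, ∑ j, (d i - d j) ^ 2 := by
  obtain ⟨i, j, hij⟩ := hd
  have hnonneg (k : ι) : 0 ≤ ∑ l, (d k - d l) ^ 2 := sum_nonneg fun l _ ↦ sq_nonneg _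
  have hpos : 0 < ∑ l, (d i - d l) ^ 2 :=
    sum_pos' (fun l _ ↦ sq_nonneg _) ⟨j, mem_univ j, sq_pos_of_ne_zero (sub_ne_zero.2 hij)⟩
  exact sum_pos' (fun k _ ↦ hnonneg k) ⟨i, mem_univ i, hpos⟩

theorem sum_sum_eq_zero_of_skew {M : Type*} [AddCommGroup M] [IsAddTorsionFree M]
    {b : ι → ι → M} (hb : ∀ i j, b j i = -b i j) : ∑ i, ∑ j, b i j = 0 := by
  rw [← self_eq_neg]
  calc ∑ i, ∑ j, b i j
    _ = ∑ i, ∑ j, b j i := sum_comm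
    _ = -∑ i, ∑ j, b i j := by simp only [← sum_neg_distrib, ← hb]

theorem sum_sub_expect_sub_expect_eq_zero_of_skew {M : Type*} [AddCommGroup M] [Module ℚ≥0 M]
    {b : ι → ι → M} (hb : ∀ i j, b j i = -b i j) (i : ι) :
    ∑ j, (b i j - (𝔼 k, b i k - 𝔼 k, b j k)) = 0 := by
  have : IsAddTorsionFree M := .of_module_nnrat M
  have hmean : ∑ j, 𝔼 k, b j k = 0 := by
    simp only [expect_univ, ← smul_sum, sum_sum_eq_zero_of_skew hb, smul_zero]
  rw [sum_sub_distrib, sum_sub_distrib, hmean, sum_const, card_univ, Fintype.card_smul_expect,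
    sub_zero, sub_self]

theorem sum_sum_sq_sub_expect_sub_expect_lt_of_skew {K : Type*} [Field K] [LinearOrder K]
    [IsStrictOrderedRing K] {b : ι → ι → K} (hb : ∀ i j, b j i = -b i j) {x : ι → K}
    (hx : ∃ i j, x i - x j ≠ 𝔼 k, b i k - 𝔼 k, b j k) :
    ∑ i, ∑ j, (b i j - (𝔼 k, b i k - 𝔼 k, b j k)) ^ 2 <
      ∑ i, ∑ j, (b i j - (x i - x j)) ^ 2 := by
  set m : ι → K := fun i ↦ 𝔼 k, b i k
  set e : ι → ι → K := fun i j ↦ b i j - (m i - m j)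
  set d : ι → K := fun i ↦ x i - m i
  have hrow (i : ι) : ∑ j, e i j = 0 := sum_sub_expect_sub_expect_eq_zero_of_skew hb i
  have hskew (i j : ι) : e j i = -e i j := by
    simp only [e, hb i j]
    ring
  have hcol (j : ι) : ∑ i, e i j = 0 := by
    simp only [hskew j, sum_neg_distrib, hrow, neg_zero]
  have hd : ∃ i j, d i ≠ d j :=
    hx.imp fun i ↦ Exists.imp fun j hij h ↦ hij (sub_eq_sub_iff_sub_eq_sub.1 h)
  calc ∑ i, ∑ j, e i j ^ 2
    _ < ∑ i, ∑ j, e i j ^ 2 + ∑ i, ∑ j, (d i - d j) ^ 2 :=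
        lt_add_of_pos_right _ (sum_sum_sq_sub_pos hd)
    _ = ∑ i, ∑ j, (e i j - (d i - d j)) ^ 2 := (sum_sum_sq_sub_sub hrow hcol d d).symm
    _ = ∑ i, ∑ j, (b i j - (x i - x j)) ^ 2 :=
        sum_congr rfl fun i _ ↦ sum_congr rfl fun j _ ↦ by ring

end LeastSquares

theorem log_prod_rpow_one_div_card {ι : Type*} [Fintype ι] {f : ι → ℝ} (hf : ∀ i, 0 < f i) :
    Real.log ((∏ i, f i) ^ ((1 : ℝ) / Fintype.card ι)) = 𝔼 i, Real.log (f i) := by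
  rw [Real.log_rpow (prod_pos fun i _ ↦ hf i), Real.log_prod fun i _ ↦ (hf i).ne',
    Fintype.expect_eq_sum_div_card, one_div_mul_eq_div]

theorem eq_of_div_eq_div_of_sum_eq {ι K : Type*} [Fintype ι] [DivisionSemiring K] {v w : ι → K}
    (hdiv : ∀ i j, w i / w j = v i / v j) (hsum : ∑ i, w i = ∑ i, v i) (h0 : ∑ i, v i ≠ 0) :
    w = v := by
  funext j
  have hj : (∑ i, v i) / w j = (∑ i, v i) / v j := by
    rw [← hsum, sum_div, hsum, sum_div]
    exact sum_congr rfl fun i _ ↦ hdiv i j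
  simpa only [div_eq_mul_inv, mul_right_inj' h0, inv_inj] using hj

theorem IsPCM.log_swap {n : ℕ} {A : Matrix (Fin n) (Fin n) ℝ} (hA : IsPCM A) (i j : Fin n) :
    Real.log (A j i) = -Real.log (A i j) := by
  rw [hA.2 i j, one_div, Real.log_inv]

section LLSM

variable {n : ℕ} {A : Matrix (Fin n) (Fin n) ℝ}

theorem prod_rpow_one_div_pos (hA : ∀ i j, 0 < A i j) (i : Fin n) :
    0 < (∏ j, A i j) ^ ((1 : ℝ) / n) :=
  Real.rpow_pos_of_pos (prod_pos fun j _ ↦ hA i j) _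

theorem sum_prod_rpow_one_div_pos [NeZero n] (hA : ∀ i j, 0 < A i j) :
    0 < ∑ i, (∏ j, A i j) ^ ((1 : ℝ) / n) :=
  sum_pos (fun i _ ↦ prod_rpow_one_div_pos hA i) univ_nonempty

theorem llsm_pos (hA : ∀ i j, 0 < A i j) (i : Fin n) : 0 < llsm A i :=
  have : NeZero n := ⟨i.pos.ne'⟩
  div_pos (prod_rpow_one_div_pos hA i) (sum_prod_rpow_one_div_pos hA)

theorem sum_llsm [NeZero n] (hA : ∀ i j, 0 < A i j) : ∑ i, llsm A i = 1 := by
  simp only [llsm, ← sum_div, div_self (sum_prod_rpow_one_div_pos hA).ne']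

theorem log_llsm_div_llsm (hA : ∀ i j, 0 < A i j) (i j : Fin n) :
    Real.log (llsm A i / llsm A j) = 𝔼 k, Real.log (A i k) - 𝔼 k, Real.log (A j k) := by
  have : NeZero n := ⟨i.pos.ne'⟩
  have hlog (k : Fin n) : Real.log ((∏ l, A k l) ^ ((1 : ℝ) / n)) = 𝔼 l, Real.log (A k l) := by
    simpa only [Fintype.card_fin] using log_prod_rpow_one_div_card (hA k)
  rw [llsm, llsm, div_div_div_cancel_right₀ (sum_prod_rpow_one_div_pos hA).ne',
    Real.log_div (prod_rpow_one_div_pos hA i).ne' (prod_rpow_one_div_pos hA j).ne', hlog, hlog]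

theorem IsPCM.sum_sum_sq_log_sub_log_llsm_div_llsm_lt (hA : IsPCM A) {w : Fin n → ℝ}
    (hw : ∀ i, 0 < w i) (hne : ∃ i j, w i / w j ≠ llsm A i / llsm A j) :
    ∑ i, ∑ j, (Real.log (A i j) - Real.log (llsm A i / llsm A j)) ^ 2 <
      ∑ i, ∑ j, (Real.log (A i j) - Real.log (w i / w j)) ^ 2 := by
  have hlog (i j : Fin n) : Real.log (w i / w j) = Real.log (w i) - Real.log (w j) :=
    Real.log_div (hw i).ne' (hw j).ne'
  have hdiff : ∃ i j, Real.log (w i) - Real.log (w j) ≠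
      𝔼 k, Real.log (A i k) - 𝔼 k, Real.log (A j k) := by
    obtain ⟨i, j, hij⟩ := hne
    refine ⟨i, j, ?_⟩
    rw [← hlog, ← log_llsm_div_llsm hA.1]
    exact Real.log_injOn_pos.ne (div_pos (hw i) (hw j))
      (div_pos (llsm_pos hA.1 i) (llsm_pos hA.1 j)) hij
  simpa only [hlog, log_llsm_div_llsm hA.1] using
    sum_sum_sq_sub_expect_sub_expect_lt_of_skew hA.log_swap hdiff

end LLSM

theorem llsm_unique_minimizer {n : ℕ} (hn : 2 ≤ n)
    (A : Matrix (Fin n) (Fin n) ℝ) (hA : IsPCM A) :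
    (∀ i, 0 < llsm A i) ∧ (∑ i, llsm A i = 1) ∧
    (∀ w : Fin n → ℝ, (∀ i, 0 < w i) → (∑ i, w i = 1) → w ≠ llsm A →
      ∑ i, ∑ j, (Real.log (A i j) - Real.log (llsm A i / llsm A j)) ^ 2 <
        ∑ i, ∑ j, (Real.log (A i j) - Real.log (w i / w j)) ^ 2) := by
  have : NeZero n := ⟨by lia⟩
  have hsum : ∑ i, llsm A i = 1 := sum_llsm hA.1
  refine ⟨llsm_pos hA.1, hsum, fun w hw hw_sum hne ↦ ?_⟩
  apply hA.sum_sum_sq_log_sub_log_llsm_div_llsm_lt hw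
  by_contra! hdiv
  exact hne (eq_of_div_eq_div_of_sum_eq hdiv (hw_sum.trans hsum.symm) (hsum ▸ one_ne_zero))
end

section
/- The Logarithmic Least Squares Method satisfies correctness: for every consistent n×n pairwise comparison matrix A, the LLSM weight vector w satisfies w_i / w_j = a_{i,j} for all 1 ≤ i, j ≤ n. -/
open Finset

section

variable {n : ℕ} {A : Matrix (Fin n) (Fin n) ℝ}

theorem llsm_div_llsm (hpos : ∀ i j, 0 < A i j) (i j : Fin n) :
    llsm A i / llsm A j = (∏ k, A i k / A j k) ^ ((1 : ℝ) / n) := by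
  have hprod (i) : 0 < ∏ k, A i k := prod_pos fun k _ ↦ hpos i k
  have hsum : 0 < ∑ i, (∏ k, A i k) ^ ((1 : ℝ) / n) :=
    sum_pos (fun i _ ↦ Real.rpow_pos_of_pos (hprod i) _) ⟨i, mem_univ i⟩
  calc
    llsm A i / llsm A j = (∏ k, A i k) ^ ((1 : ℝ) / n) / (∏ k, A j k) ^ ((1 : ℝ) / n) :=
      div_div_div_cancel_right₀ hsum.ne' _ _
    _ = (∏ k, A i k / A j k) ^ ((1 : ℝ) / n) := by
      rw [← Real.div_rpow (hprod i).le (hprod j).le, prod_div_distrib]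

theorem IsConsistent.div_eq (hcons : IsConsistent A) {i j k : Fin n} (hjk : A j k ≠ 0) :
    A i k / A j k = A i j :=
  (div_eq_iff hjk).mpr (hcons i j k)

end

theorem llsm_correctness {n : ℕ} (A : Matrix (Fin n) (Fin n) ℝ)
    (hA : IsPCM A) (hcons : IsConsistent A) :
    ∀ i j, llsm A i / llsm A j = A i j := by
  intro i j
  calc
    llsm A i / llsm A j = (∏ k, A i k / A j k) ^ ((1 : ℝ) / n) := llsm_div_llsm hA.1 i j
    _ = (∏ _k : Fin n, A i j) ^ ((1 : ℝ) / n) := by simp only [hcons.div_eq (hA.1 j _).ne']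
    _ = (A i j ^ n) ^ ((n : ℝ)⁻¹) := by rw [Fin.prod_const, one_div]
    _ = A i j := Real.pow_rpow_inv_natCast (hA.1 i j).le i.pos.ne'
end

section
/- Let A be a consistent n×n pairwise comparison matrix (n ≥ 1) and let w ∈ ℝ^n be a vector with all entries positive such that A·w = λ·w for some real number λ. Then λ = n and w_i / w_j = a_{i,j} for all 1 ≤ i, j ≤ n. (This expresses correctness of the Eigenvector Method in the consistent case.) -/
open Finset

/-!
Consistency makes every row of `A` a multiple of every other row: row `i` is `a_{i,j}` times row
`j`. Hence `(A w)_i = a_{i,j} (A w)_j` for every `w`, and if `A w = λ w` with `λ ≠ 0`, cancelling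
`λ` gives `w_i = a_{i,j} w_j`. Summing this over `j` yields `n w_i = (A w)_i = λ w_i`.
Positivity serves to exclude the eigenvalue `0`.
-/

section ConsistentMatrix

variable {ι R : Type*} [Fintype ι]

section Semiring

variable [NonUnitalSemiring R] {A : Matrix ι ι R}

theorem mulVec_apply_eq_mul_of_consistent (hA : ∀ i j k, A i k = A i j * A j k)
    (v : ι → R) (i j : ι) : A.mulVec v i = A i j * A.mulVec v j := by
  simp only [Matrix.mulVec, dotProduct, mul_sum, ← mul_assoc, ← hA]

end Semiring

section CancelCommSemiring

variable [CommSemiring R] [IsCancelMulZero R] {A : Matrix ι ι R} {w : ι → R} {c : R}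

theorem eigenvector_apply_eq_mul_of_consistent (hA : ∀ i j k, A i k = A i j * A j k)
    (hc : c ≠ 0) (hw : A.mulVec w = c • w) (i j : ι) : w i = A i j * w j := by
  have h : c * w i = A i j * (c * w j) := by
    simpa only [hw, Pi.smul_apply, smul_eq_mul] using mulVec_apply_eq_mul_of_consistent hA w i j
  exact mul_left_cancel₀ hc (h.trans (mul_left_comm _ _ _))

theorem eigenvector_apply_ne_zero_of_consistent (hA : ∀ i j k, A i k = A i j * A j k)
    (hw₀ : w ≠ 0) (hc : c ≠ 0) (hw : A.mulVec w = c • w) (j : ι) : w j ≠ 0 := by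
  obtain ⟨i, hi⟩ := Function.ne_iff.mp hw₀
  rw [eigenvector_apply_eq_mul_of_consistent hA hc hw i j] at hi
  exact right_ne_zero_of_mul hi

theorem eigenvalue_eq_card_of_consistent (hA : ∀ i j k, A i k = A i j * A j k)
    (hw₀ : w ≠ 0) (hc : c ≠ 0) (hw : A.mulVec w = c • w) : c = Fintype.card ι := by
  obtain ⟨i, hi⟩ := Function.ne_iff.mp hw₀
  refine mul_right_cancel₀ hi ?_
  calc
    c * w i = ∑ j, A i j * w j := (congrFun hw i).symm
    _ = ∑ _j : ι, w i :=
      sum_congr rfl fun j _ => (eigenvector_apply_eq_mul_of_consistent hA hc hw i j).symm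
    _ = Fintype.card ι * w i := by rw [sum_const, card_univ, nsmul_eq_mul]

end CancelCommSemiring

theorem eigenvalue_pos_of_row_pos [Semiring R] [LinearOrder R] [IsStrictOrderedRing R]
    {A : Matrix ι ι R} {w : ι → R} {c : R} {i : ι} (hA : ∀ j, 0 < A i j) (hw : ∀ j, 0 < w j)
    (heig : A.mulVec w = c • w) : 0 < c := by
  have hpos : 0 < c * w i := by
    rw [← smul_eq_mul, ← Pi.smul_apply, ← heig]
    exact sum_pos (fun j _ => mul_pos (hA j) (hw j)) ⟨i, mem_univ i⟩
  exact pos_of_mul_pos_left hpos (hw i).le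

theorem em_correctness_general {K : Type*} [Field K] {A : Matrix ι ι K}
    (hA : ∀ i j k, A i k = A i j * A j k) {w : ι → K} (hw₀ : w ≠ 0) {c : K} (hc : c ≠ 0)
    (hw : A.mulVec w = c • w) : c = Fintype.card ι ∧ ∀ i j, w i / w j = A i j :=
  ⟨eigenvalue_eq_card_of_consistent hA hw₀ hc hw, fun i j =>
    (div_eq_iff (eigenvector_apply_ne_zero_of_consistent hA hw₀ hc hw j)).mpr
      (eigenvector_apply_eq_mul_of_consistent hA hc hw i j)⟩

end ConsistentMatrix

theorem em_correctness {n : ℕ} (hn : 1 ≤ n) (A : Matrix (Fin n) (Fin n) ℝ)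
    (hA : IsPCM A) (hcons : IsConsistent A)
    (w : Fin n → ℝ) (hw : ∀ i, 0 < w i) (lam : ℝ)
    (heig : A.mulVec w = lam • w) :
    lam = n ∧ ∀ i j, w i / w j = A i j := by
  have hw₀ : w ≠ 0 := Function.ne_iff.mpr ⟨⟨0, hn⟩, (hw _).ne'⟩
  simpa only [Fintype.card_fin] using
    em_correctness_general hcons hw₀ (eigenvalue_pos_of_row_pos (hA.1 ⟨0, hn⟩) hw heig).ne' heig
end

section
/- The Logarithmic Least Squares Method satisfies invariance to α-transformation on a triad: if A and Â are n×n pairwise comparison matrices such that Â is obtained from A by an α-transformation on some triad (i,j,k) with some α > 0, then the LLSM weight vectors of A and Â are equal. -/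
open Finset

/-! The weights depend on the matrix only through its row products. Each of the rows `i`, `j`, `k`
of the triad has one entry multiplied by `α` and another divided by `α`, so its product does not
change. -/

theorem prod_eq_prod_of_mul_eq_mul_of_eq {ι M : Type*} [Fintype ι] [CommMonoid M] {f g : ι → M}
    {p q : ι} (hpq : p ≠ q) (hmul : f p * f q = g p * g q)
    (heq : ∀ m, m ≠ p → m ≠ q → f m = g m) : ∏ m, f m = ∏ m, g m := by
  classical
  rw [← prod_mul_prod_compl {p, q} f, ← prod_mul_prod_compl {p, q} g, prod_pair hpq,
    prod_pair hpq, hmul]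
  congr 1
  refine prod_congr rfl fun m hm ↦ ?_
  obtain ⟨hmp, hmq⟩ : m ≠ p ∧ m ≠ q := by simpa using hm
  exact heq m hmp hmq

theorem llsm_eq_of_prod_row_eq {n : ℕ} {A B : Matrix (Fin n) (Fin n) ℝ}
    (hrow : ∀ l, ∏ m, A l m = ∏ m, B l m) : llsm A = llsm B := by
  funext l
  simp only [llsm, hrow]

namespace TriadTransform

variable {n : ℕ} {A Ahat : Matrix (Fin n) (Fin n) ℝ} {i j k : Fin n} {α : ℝ}

theorem rotate (h : TriadTransform A Ahat i j k α) : TriadTransform A Ahat j k i α := by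
  obtain ⟨hij, hjk, hik, hα, Aij, Aji, Ajk, Akj, Aki, Aik, hrest⟩ := h
  exact ⟨hjk, hik.symm, hij.symm, hα, Ajk, Akj, Aki, Aik, Aij, Aji,
    fun l m hjk hkj hki hik hij hji ↦ hrest l m hij hji hjk hkj hki hik⟩

theorem prod_row_left_eq (h : TriadTransform A Ahat i j k α) :
    ∏ m, A i m = ∏ m, Ahat i m := by
  obtain ⟨hij, hjk, hik, hα, Aij, -, -, -, -, Aik, hrest⟩ := h
  have hmul : A i j * A i k = Ahat i j * Ahat i k := by
    rw [Aij, Aik]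
    field_simp
  have heq : ∀ m, m ≠ j → m ≠ k → A i m = Ahat i m := by
    intro m hmj hmk
    symm
    apply hrest <;> simp [hij, hik, hmj, hmk]
  exact prod_eq_prod_of_mul_eq_mul_of_eq hjk hmul heq

theorem apply_eq_of_ne (h : TriadTransform A Ahat i j k α) {l : Fin n} (hli : l ≠ i)
    (hlj : l ≠ j) (hlk : l ≠ k) (m : Fin n) : Ahat l m = A l m := by
  obtain ⟨-, -, -, -, -, -, -, -, -, -, hrest⟩ := h
  apply hrest <;> simp [hli, hlj, hlk]

theorem prod_row_eq (h : TriadTransform A Ahat i j k α) (l : Fin n) :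
    ∏ m, A l m = ∏ m, Ahat l m := by
  rcases eq_or_ne l i with rfl | hli
  · exact h.prod_row_left_eq
  rcases eq_or_ne l j with rfl | hlj
  · exact h.rotate.prod_row_left_eq
  rcases eq_or_ne l k with rfl | hlk
  · exact h.rotate.rotate.prod_row_left_eq
  exact prod_congr rfl fun m _ ↦ (h.apply_eq_of_ne hli hlj hlk m).symm

end TriadTransform

theorem llsm_invariant_triadTransform_general {n : ℕ} {A Ahat : Matrix (Fin n) (Fin n) ℝ}
    {i j k : Fin n} {α : ℝ} (h : TriadTransform A Ahat i j k α) : llsm A = llsm Ahat :=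
  llsm_eq_of_prod_row_eq h.prod_row_eq

theorem llsm_invariant_triadTransform {n : ℕ}
    (A Ahat : Matrix (Fin n) (Fin n) ℝ) (i j k : Fin n) (α : ℝ)
    (hA : IsPCM A) (h : TriadTransform A Ahat i j k α) :
    llsm A = llsm Ahat :=
  llsm_invariant_triadTransform_general h
end

section
/- Let A be the 4×4 pairwise comparison matrix with rows (1,1,1,8), (1,1,1,1), (1,1,1,1), (1/8,1,1,1), and let Â be the 4×4 pairwise comparison matrix with rows (1,2,1,4), (1/2,1,1,2), (1,1,1,1), (1/4,1/2,1,1); note that Â is obtained from A by the α-transformation on the triad (1,2,4) with α = 2. Then for all real numbers λ, μ and all vectors w, ŵ ∈ ℝ^4 with positive entries and Σ w_i = Σ ŵ_i = 1 such that A·w = λ·w and Â·ŵ = μ·ŵ, we have w ≠ ŵ. (This shows the Eigenvector Method violates invariance to α-transformation on a triad.) -/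
open Finset

/-!
In a row not involved in the transformation, `A` and `Ahat` agree, so a common eigenvector with
nonzero entries has the same eigenvalue for both and hence `Ahat w = A w`. Comparing row `i` then
gives the balance `Ahat i j * w j = A i k * w k`, and likewise in rows `j` and `k`. In the product
of the three balances the weights cancel: the cyclic product of `Ahat` along `(i, j, k)` equals
that of `A` along the reversed triad `(i, k, j)`. In the example these are `1` and `8`.
-/

/-- The product of the entries of `A` along the directed cycle `i → j → k → i`. For a reciprocal
matrix, reversing the cycle inverts this product, and the triad is consistent exactly when the
product is `1`. -/
def triadProduct {n : ℕ} (A : Matrix (Fin n) (Fin n) ℝ) (i j k : Fin n) : ℝ :=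
  A i j * A j k * A k i

namespace TriadTransform

variable {n : ℕ} {A Ahat : Matrix (Fin n) (Fin n) ℝ} {i j k : Fin n} {α : ℝ}

theorem apply_fst_of_ne (h : TriadTransform A Ahat i j k α) {m : Fin n} (hj : m ≠ j)
    (hk : m ≠ k) : Ahat i m = A i m := by
  obtain ⟨hij, -, hik, -, -, -, -, -, -, -, hA⟩ := h
  apply hA <;> simp [hj, hk, hij, hik]

theorem mulVec_apply_of_ne (h : TriadTransform A Ahat i j k α) {l : Fin n} (hi : l ≠ i)
    (hj : l ≠ j) (hk : l ≠ k) (w : Fin n → ℝ) : Ahat.mulVec w l = A.mulVec w l := by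
  obtain ⟨-, -, -, -, -, -, -, -, -, -, hA⟩ := h
  have hrow : ∀ m, Ahat l m = A l m := fun m => by
    apply hA <;> simp [hi, hj, hk]
  simp only [Matrix.mulVec, dotProduct, hrow]

theorem mulVec_sub_mulVec_apply_fst (h : TriadTransform A Ahat i j k α) (w : Fin n → ℝ) :
    Ahat.mulVec w i - A.mulVec w i =
      (Ahat i j - A i j) * w j + (Ahat i k - A i k) * w k := by
  have hjk : j ≠ k := h.2.1
  rw [← Pi.sub_apply, ← Matrix.sub_mulVec]
  refine Fintype.sum_eq_add j k hjk fun m hm => ?_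
  simp [h.apply_fst_of_ne hm.1 hm.2]

theorem apply_mul_eq_apply_mul (h : TriadTransform A Ahat i j k α) (hα : α ≠ 1)
    {w : Fin n → ℝ} (hw : Ahat.mulVec w = A.mulVec w) : Ahat i j * w j = A i k * w k := by
  have hrow := h.mulVec_sub_mulVec_apply_fst w
  obtain ⟨-, -, -, hα₀, hAij, -, -, -, -, hAik, -⟩ := h
  rw [hw, sub_self, hAij, hAik] at hrow
  have hfactor : (α - 1) * (α * A i j * w j - A i k * w k) = 0 := by
    field_simp at hrow
    linear_combination -hrow
  rw [hAij]
  exact sub_eq_zero.mp ((mul_eq_zero.mp hfactor).resolve_left (sub_ne_zero.mpr hα))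

theorem triadProduct_eq_of_mulVec_eq (h : TriadTransform A Ahat i j k α) (hα : α ≠ 1)
    {w : Fin n → ℝ} (hi : w i ≠ 0) (hj : w j ≠ 0) (hk : w k ≠ 0)
    (hw : Ahat.mulVec w = A.mulVec w) : triadProduct Ahat i j k = triadProduct A i k j := by
  have hrow_i : Ahat i j * w j = A i k * w k := h.apply_mul_eq_apply_mul hα hw
  have hrow_j : Ahat j k * w k = A j i * w i := h.rotate.apply_mul_eq_apply_mul hα hw
  have hrow_k : Ahat k i * w i = A k j * w j := h.rotate.rotate.apply_mul_eq_apply_mul hα hw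
  apply mul_right_cancel₀ (mul_ne_zero (mul_ne_zero hi hj) hk)
  calc triadProduct Ahat i j k * (w i * w j * w k)
      = (Ahat i j * w j) * (Ahat j k * w k) * (Ahat k i * w i) := by
        unfold triadProduct; ring
    _ = (A i k * w k) * (A j i * w i) * (A k j * w j) := by rw [hrow_i, hrow_j, hrow_k]
    _ = triadProduct A i k j * (w i * w j * w k) := by
        unfold triadProduct; ring

theorem eigenvalue_eq (h : TriadTransform A Ahat i j k α) {l : Fin n} (hi : l ≠ i)
    (hj : l ≠ j) (hk : l ≠ k) {lam mu : ℝ} {w : Fin n → ℝ} (hwl : w l ≠ 0)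
    (heig : A.mulVec w = lam • w) (heighat : Ahat.mulVec w = mu • w) : mu = lam := by
  have hrow := h.mulVec_apply_of_ne hi hj hk w
  rw [heig, heighat] at hrow
  exact mul_right_cancel₀ hwl hrow

end TriadTransform

theorem em_violates_IT_general {n : ℕ} (hn : 3 < n) {A Ahat : Matrix (Fin n) (Fin n) ℝ}
    {i j k : Fin n} {α : ℝ} (h : TriadTransform A Ahat i j k α) (hα : α ≠ 1)
    (htriad : triadProduct Ahat i j k ≠ triadProduct A i k j)
    {lam mu : ℝ} {w what : Fin n → ℝ} (hw : ∀ m, w m ≠ 0)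
    (heig : A.mulVec w = lam • w) (heighat : Ahat.mulVec what = mu • what) :
    w ≠ what := by
  rintro rfl
  obtain ⟨l, -, hl⟩ : ∃ l ∈ univ, l ∉ ({i, j, k} : Finset (Fin n)) :=
    exists_mem_notMem_of_card_lt_card (card_le_three.trans_lt (by simpa using hn))
  obtain ⟨hi, hj, hk⟩ : l ≠ i ∧ l ≠ j ∧ l ≠ k := by simpa using hl
  have hlam : mu = lam := h.eigenvalue_eq hi hj hk (hw l) heig heighat
  have hmulVec : Ahat.mulVec w = A.mulVec w := by rw [heighat, heig, hlam]
  exact htriad (h.triadProduct_eq_of_mulVec_eq hα (hw i) (hw j) (hw k) hmulVec)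

theorem triadTransform_zero_one_three :
    TriadTransform !![1, 1, 1, 8; 1, 1, 1, 1; 1, 1, 1, 1; 1 / 8, 1, 1, 1]
      !![1, 2, 1, 4; 1 / 2, 1, 1, 2; 1, 1, 1, 1; 1 / 4, 1 / 2, 1, 1] 0 1 3 2 := by
  refine ⟨by decide, by decide, by decide, two_pos, ?_, ?_, ?_, ?_, ?_, ?_,
    fun l m => by fin_cases l <;> fin_cases m <;> simp⟩
  all_goals simp only [Matrix.of_apply, Matrix.cons_val] <;> norm_num

theorem em_violates_IT
    (A Ahat : Matrix (Fin 4) (Fin 4) ℝ)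
    (hA : A = !![1, 1, 1, 8; 1, 1, 1, 1; 1, 1, 1, 1; 1/8, 1, 1, 1])
    (hAhat : Ahat = !![1, 2, 1, 4; 1/2, 1, 1, 2; 1, 1, 1, 1; 1/4, 1/2, 1, 1])
    (lam mu : ℝ) (w what : Fin 4 → ℝ)
    (hw : ∀ i, 0 < w i) (hwhat : ∀ i, 0 < what i)
    (hws : ∑ i, w i = 1) (hwhats : ∑ i, what i = 1)
    (heig : A.mulVec w = lam • w) (heighat : Ahat.mulVec what = mu • what) :
    w ≠ what := by
  subst hA hAhat
  exact em_violates_IT_general (by norm_num) triadTransform_zero_one_three (by norm_num)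
    (by simp only [triadProduct, Matrix.of_apply, Matrix.cons_val]; norm_num)
    (fun m => (hw m).ne') heig heighat
end

section
/- Let A be an n×n pairwise comparison matrix (n ≥ 3) and let P_i = (∏_{j=1}^n a_{i,j})^{1/n} denote the geometric mean of the i-th row. Let B be the matrix with entries b_{i,j} = P_i / P_j. Then B is a consistent pairwise comparison matrix, and B can be obtained from A by a finite sequence of α-transformations on triads; that is, the pair (A, B) lies in the reflexive–transitive closure of the relation 'is obtained by an α-transformation on some triad with some α > 0'. -/
open Finset

/-!
Multiplying a pairwise comparison matrix entrywise by a reciprocal matrix with row products one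
keeps it a pairwise comparison matrix with the same row products, and an α-transformation is such a
multiplication. Conversely, fix a pivot index `z`. For distinct `a, b ≠ z`, the triad `(a, b, z)`
with a suitable `α` gives the entry `(a, b)` any prescribed positive value, and among the entries
off the row and column of `z` it moves only `(a, b)` and `(b, a)`. So all entries off the pivot can
be corrected one pair at a time, and the row products then determine the entries in the row and
column of `z`. Hence pairwise comparison matrices with equal row products are connected by
α-transformations. The total product of `A` is one, so `(P i / P j)` has the row products of `A`.
-/

section PCM

open Matrix

variable {n : ℕ} {A B E : Matrix (Fin n) (Fin n) ℝ}

theorem isPCM_of_eq_div (hE : ∀ i j, 0 < E i j) (hA : ∀ i j, A i j = E i j / E j i) : IsPCM A :=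
  ⟨fun i j => hA i j ▸ div_pos (hE i j) (hE j i), fun i j => by rw [hA, hA, one_div_div]⟩

theorem isConsistent_of_eq_div {w : Fin n → ℝ} (hw : ∀ i, w i ≠ 0)
    (hA : ∀ i j, A i j = w i / w j) : IsConsistent A := fun i j k => by
  rw [hA, hA, hA, div_mul_div_cancel₀ (hw j)]

namespace IsPCM

theorem hadamard (hA : IsPCM A) (hB : IsPCM B) : IsPCM (A ⊙ B) :=
  ⟨fun i j => mul_pos (hA.1 i j) (hB.1 i j), fun i j => by
    rw [hadamard_apply, hadamard_apply, hA.2, hB.2, one_div_mul_one_div]⟩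

theorem apply_self (hA : IsPCM A) (i : Fin n) : A i i = 1 := by
  have h : A i i * A i i = 1 := (eq_div_iff (hA.1 i i).ne').mp (hA.2 i i)
  exact (mul_self_eq_one_iff.mp h).resolve_right (by linarith [hA.1 i i])

theorem prod_row_pos (hA : IsPCM A) (i : Fin n) : 0 < ∏ j, A i j :=
  prod_pos fun j _ => hA.1 i j

theorem prod_prod_eq_one (hA : IsPCM A) : ∏ i, ∏ j, A i j = 1 := by
  have hsq : (∏ i, ∏ j, A i j) * ∏ i, ∏ j, A i j = 1 := calc
    _ = (∏ i, ∏ j, A i j) * ∏ i, ∏ j, A j i := by rw [prod_comm (f := fun i j => A j i)]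
    _ = ∏ i, ∏ j, A i j * A j i := by simp only [prod_mul_distrib]
    _ = 1 := prod_eq_one fun i _ => prod_eq_one fun j _ => by
      rw [hA.2 i j, mul_one_div_cancel (hA.1 i j).ne']
  have hpos : 0 < ∏ i, ∏ j, A i j := prod_pos fun i _ => hA.prod_row_pos i
  exact (mul_self_eq_one_iff.mp hsq).resolve_right (by linarith)

theorem ext_of_prod_row_eq (hA : IsPCM A) (hB : IsPCM B) (hAB : ∀ i, ∏ j, A i j = ∏ j, B i j)
    (z : Fin n) (hoff : ∀ i j, i ≠ z → j ≠ z → A i j = B i j) : A = B := by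
  have hcol : ∀ i, i ≠ z → A i z = B i z := fun i hi => by
    have hrest : ∏ j ∈ univ.erase z, A i j = ∏ j ∈ univ.erase z, B i j :=
      prod_congr rfl fun j hj => hoff i j hi (ne_of_mem_erase hj)
    have hrow := hAB i
    rw [← mul_prod_erase univ _ (mem_univ z), ← mul_prod_erase univ (B i) (mem_univ z),
      hrest] at hrow
    exact mul_right_cancel₀ (prod_pos fun j _ => hB.1 i j).ne' hrow
  ext i j
  by_cases hi : i = z <;> by_cases hj : j = z
  · rw [hi, hj, hA.apply_self, hB.apply_self]
  · rw [hi, hA.2 j z, hB.2 j z, hcol j hj]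
  · rw [hj, hcol i hi]
  · exact hoff i j hi hj

end IsPCM

end PCM

section TriadScaling

open Matrix

variable {ι R : Type*} [DecidableEq ι]

/-- The matrix with entry `α` at the positions `(i, j)`, `(j, k)`, `(k, i)` of a directed triad and
`1` elsewhere. Where positions coincide, their factors multiply. -/
def triadCycle [CommMonoid R] (i j k : ι) (α : R) : Matrix ι ι R :=
  of fun l m => (if l = i ∧ m = j then α else 1) * (if l = j ∧ m = k then α else 1) *
    (if l = k ∧ m = i then α else 1)

/-- The reciprocal matrix by which the α-transformation on the triad `(i, j, k)` multiplies a
matrix entrywise. -/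
def triadScaling [CommGroupWithZero R] (i j k : ι) (α : R) : Matrix ι ι R :=
  of fun l m => triadCycle i j k α l m / triadCycle i j k α m l

theorem transpose_triadCycle [CommMonoid R] (i j k : ι) (α : R) :
    (triadCycle i j k α)ᵀ = triadCycle i k j α := by
  ext l m
  simp only [triadCycle, transpose_apply, of_apply, and_comm]
  ac_rfl

theorem prod_row_triadCycle [CommMonoid R] [Fintype ι] (i j k : ι) (α : R) (l : ι) :
    ∏ m, triadCycle i j k α l m =
      (if l = i then α else 1) * (if l = j then α else 1) * (if l = k then α else 1) := by
  simp only [triadCycle, of_apply, prod_mul_distrib, ite_and]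
  congr 2 <;> split_ifs <;> simp

theorem prod_col_triadCycle [CommMonoid R] [Fintype ι] (i j k : ι) (α : R) (m : ι) :
    ∏ l, triadCycle i j k α l m = ∏ l, triadCycle i j k α m l := by
  simp_rw [← transpose_apply (triadCycle i j k α) m, transpose_triadCycle, prod_row_triadCycle]
  rw [mul_right_comm]

theorem prod_row_triadScaling [CommGroupWithZero R] [Fintype ι] (i j k : ι) {α : R} (hα : α ≠ 0)
    (l : ι) : ∏ m, triadScaling i j k α l m = 1 := by
  simp only [triadScaling, of_apply, prod_div_distrib, prod_col_triadCycle, prod_row_triadCycle]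
  exact div_self (by split_ifs <;> simp [hα])

theorem prod_row_hadamard_triadScaling [CommGroupWithZero R] [Fintype ι] (A : Matrix ι ι R)
    (i j k : ι) {α : R} (hα : α ≠ 0) (l : ι) :
    ∏ m, (A ⊙ triadScaling i j k α) l m = ∏ m, A l m := by
  simp only [hadamard_apply, prod_mul_distrib, prod_row_triadScaling i j k hα, mul_one]

end TriadScaling

section OffPivotDiff

variable {ι R : Type*} [Fintype ι] [DecidableEq ι] [DecidableEq R]

/-- The positions off the row and column of the pivot `z` at which `A` and `B` differ: what is left
to correct on the way from `A` to `B`. -/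
def offPivotDiff (z : ι) (A B : Matrix ι ι R) : Finset (ι × ι) :=
  {p | p.1 ≠ z ∧ p.2 ≠ z ∧ A p.1 p.2 ≠ B p.1 p.2}

theorem mk_mem_offPivotDiff {z : ι} {A B : Matrix ι ι R} {a b : ι} :
    (a, b) ∈ offPivotDiff z A B ↔ a ≠ z ∧ b ≠ z ∧ A a b ≠ B a b := by
  simp [offPivotDiff]

end OffPivotDiff

section TriadStep

open Matrix Relation

variable {n : ℕ} {A B : Matrix (Fin n) (Fin n) ℝ}

/-- One α-transformation on some triad, the relation whose reflexive-transitive closure is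
reachability. -/
def TriadStep (A B : Matrix (Fin n) (Fin n) ℝ) : Prop :=
  ∃ i j k α, TriadTransform A B i j k α

theorem isPCM_triadScaling (i j k : Fin n) {α : ℝ} (hα : 0 < α) :
    IsPCM (triadScaling i j k α) := by
  refine isPCM_of_eq_div (E := triadCycle i j k α) (fun l m => ?_) fun _ _ => rfl
  simp only [triadCycle, of_apply]
  positivity

theorem triadTransform_hadamard_triadScaling (A : Matrix (Fin n) (Fin n) ℝ) {i j k : Fin n}
    (hij : i ≠ j) (hjk : j ≠ k) (hik : i ≠ k) {α : ℝ} (hα : 0 < α) :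
    TriadTransform A (A ⊙ triadScaling i j k α) i j k α := by
  refine ⟨hij, hjk, hik, hα, ?_, ?_, ?_, ?_, ?_, ?_, ?_⟩
  on_goal 7 =>
    intro l m h₁ h₂ h₃ h₄ h₅ h₆
    simp only [ne_eq, Prod.mk.injEq] at h₁ h₂ h₃ h₄ h₅ h₆
    simp [triadScaling, triadCycle, and_comm, *]
  all_goals
    simp [triadScaling, triadCycle, hij, hjk, hik, hij.symm, hjk.symm, hik.symm, div_eq_mul_inv,
      mul_comm]

theorem ne_of_mk_mem_offPivotDiff (hA : IsPCM A) (hB : IsPCM B) {z a b : Fin n}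
    (hab : (a, b) ∈ offPivotDiff z A B) : a ≠ b := by
  rintro rfl
  exact (mk_mem_offPivotDiff.mp hab).2.2 (by rw [hA.apply_self, hB.apply_self])

theorem offPivotDiff_hadamard_triadScaling_ssubset (hA : IsPCM A) (hB : IsPCM B) {z a b : Fin n}
    (hab : (a, b) ∈ offPivotDiff z A B) :
    offPivotDiff z (A ⊙ triadScaling a b z (B a b / A a b)) B ⊂ offPivotDiff z A B := by
  set C := A ⊙ triadScaling a b z (B a b / A a b) with hC
  have hα : 0 < B a b / A a b := div_pos (hB.1 a b) (hA.1 a b)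
  have hCpcm : IsPCM C := hA.hadamard (isPCM_triadScaling a b z hα)
  have hne : a ≠ b := ne_of_mk_mem_offPivotDiff hA hB hab
  obtain ⟨ha, hb, -⟩ := mk_mem_offPivotDiff.mp hab
  obtain ⟨-, -, -, -, hCab, -, -, -, -, -, hrest⟩ :=
    triadTransform_hadamard_triadScaling A hne hb ha hα
  rw [← hC, div_mul_cancel₀ _ (hA.1 a b).ne'] at hCab
  have hCba : C b a = B b a := by rw [hCpcm.2 a b, hB.2 a b, hCab]
  refine (ssubset_iff_of_subset ?_).mpr ⟨(a, b), hab, by simp [mk_mem_offPivotDiff, hCab]⟩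
  rintro ⟨l, m⟩ hlm
  obtain ⟨hl, hm, hdiff⟩ := mk_mem_offPivotDiff.mp hlm
  have hCA : C l m = A l m :=
    hrest l m (by rintro ⟨⟩; exact hdiff hCab) (by rintro ⟨⟩; exact hdiff hCba)
      (by simp [hm]) (by simp [hl]) (by simp [hl]) (by simp [hm])
  exact mk_mem_offPivotDiff.mpr ⟨hl, hm, hCA ▸ hdiff⟩

theorem IsPCM.reflTransGen_triadStep (hA : IsPCM A) (hB : IsPCM B)
    (hAB : ∀ i, ∏ j, A i j = ∏ j, B i j) : ReflTransGen TriadStep A B := by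
  obtain _ | ⟨⟨z⟩⟩ := isEmpty_or_nonempty (Fin n)
  · rw [Subsingleton.elim A B]
  induction hD : offPivotDiff z A B using Finset.strongInduction generalizing A with
  | H D ih =>
    subst hD
    obtain hempty | ⟨⟨a, b⟩, hab⟩ := (offPivotDiff z A B).eq_empty_or_nonempty
    · have hoff : ∀ i j, i ≠ z → j ≠ z → A i j = B i j := fun i j hi hj => by
        by_contra hij
        exact notMem_empty (i, j) (hempty ▸ mk_mem_offPivotDiff.mpr ⟨hi, hj, hij⟩)
      rw [hA.ext_of_prod_row_eq hB hAB z hoff]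
    · obtain ⟨ha, hb, -⟩ := mk_mem_offPivotDiff.mp hab
      have hne : a ≠ b := ne_of_mk_mem_offPivotDiff hA hB hab
      have hα : 0 < B a b / A a b := div_pos (hB.1 a b) (hA.1 a b)
      refine .head ⟨a, b, z, _, triadTransform_hadamard_triadScaling A hne hb ha hα⟩
        (ih _ (offPivotDiff_hadamard_triadScaling_ssubset hA hB hab)
          (hA.hadamard (isPCM_triadScaling a b z hα)) (fun i => ?_) rfl)
      rw [prod_row_hadamard_triadScaling A a b z hα.ne', hAB]

end TriadStep

section RowGeomMean

variable {ι : Type*} {n : ℕ}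

/-- The geometric mean `P_i` of the `i`-th row of a matrix. -/
noncomputable def rowGeomMean (A : Matrix ι (Fin n) ℝ) (i : ι) : ℝ :=
  (∏ j, A i j) ^ ((1 : ℝ) / n)

theorem rowGeomMean_pow {A : Matrix ι (Fin n) ℝ} {i : ι} (hA : ∀ j, 0 ≤ A i j) :
    rowGeomMean A i ^ n = ∏ j, A i j := by
  obtain rfl | hn := eq_or_ne n 0
  · simp
  · rw [rowGeomMean, one_div, Real.rpow_inv_natCast_pow (prod_nonneg fun j _ => hA j) hn]

namespace IsPCM

variable {A : Matrix (Fin n) (Fin n) ℝ}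

theorem rowGeomMean_pos (hA : IsPCM A) (i : Fin n) : 0 < rowGeomMean A i :=
  Real.rpow_pos_of_pos (hA.prod_row_pos i) _

theorem prod_rowGeomMean_eq_one (hA : IsPCM A) : ∏ i, rowGeomMean A i = 1 := by
  simp only [rowGeomMean]
  rw [Real.finsetProd_rpow _ _ fun i _ => (hA.prod_row_pos i).le, hA.prod_prod_eq_one,
    Real.one_rpow]

theorem prod_row_rowGeomMean_div (hA : IsPCM A) (i : Fin n) :
    ∏ j, rowGeomMean A i / rowGeomMean A j = ∏ j, A i j := by
  rw [prod_div_distrib, hA.prod_rowGeomMean_eq_one, div_one, prod_const, card_fin,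
    rowGeomMean_pow fun j => (hA.1 i j).le]

end IsPCM

end RowGeomMean

theorem pcm_reachable_consistent {n : ℕ} (hn : 3 ≤ n)
    (A : Matrix (Fin n) (Fin n) ℝ) (hA : IsPCM A)
    (B : Matrix (Fin n) (Fin n) ℝ)
    (hB : ∀ i j, B i j =
      (∏ m, A i m) ^ ((1 : ℝ) / n) / (∏ m, A j m) ^ ((1 : ℝ) / n)) :
    IsPCM B ∧ IsConsistent B ∧
    Relation.ReflTransGen
      (fun X Y : Matrix (Fin n) (Fin n) ℝ =>
        ∃ (i j k : Fin n) (α : ℝ), TriadTransform X Y i j k α) A B := by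
  have hBpcm : IsPCM B := isPCM_of_eq_div (fun i _ => hA.rowGeomMean_pos i) hB
  have hrow : ∀ i, ∏ j, A i j = ∏ j, B i j := fun i => by
    rw [← hA.prod_row_rowGeomMean_div i]
    exact prod_congr rfl fun j _ => (hB i j).symm
  exact ⟨hBpcm, isConsistent_of_eq_div (fun i => (hA.rowGeomMean_pos i).ne') hB,
    hA.reflTransGen_triadStep hBpcm hrow⟩
end

section
/- For every n ≥ 3 there exists a weighting method on n×n pairwise comparison matrices that satisfies correctness (CO) but violates invariance to α-transformation on a triad (IT). Together with the existence of a method satisfying IT but not CO, this shows that the axioms CO and IT are logically independent. -/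
open Finset

/-!
Take the weights to be a fixed column of the matrix, normalized to sum to one. Column `a` of a
consistent matrix determines the whole matrix, since `A i j = A i a * A a j = A i a / A j a`, so
this method is correct. It is nevertheless sensitive to an α-transformation with `α ≠ 1` on a triad
`(a, j, k)`: the weight ratio of `j` to `a` is `A j a`, which is divided by `α`.
-/

section ColumnWeights

variable {ι κ K : Type*} [Fintype ι] [Field K]

/-- The entries of column `a` of `A`, normalized to sum to one. As a function of a pairwise
comparison matrix `A`, for fixed `a`, this is the weighting method that only uses the comparisons
with `a`. -/
def columnWeights (A : Matrix ι κ K) (a : κ) : ι → K :=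
  fun i => A i a / ∑ k, A k a

theorem columnWeights_pos [LinearOrder K] [IsStrictOrderedRing K] {A : Matrix ι κ K} {a : κ}
    (hA : ∀ i, 0 < A i a) (i : ι) : 0 < columnWeights A a i :=
  div_pos (hA i) (sum_pos (fun k _ => hA k) ⟨i, mem_univ i⟩)

theorem sum_columnWeights {A : Matrix ι κ K} {a : κ} (hA : ∑ k, A k a ≠ 0) :
    ∑ i, columnWeights A a i = 1 := by
  simp only [columnWeights, ← sum_div, div_self hA]

theorem columnWeights_div_columnWeights {A : Matrix ι κ K} {a : κ} (hA : ∑ k, A k a ≠ 0)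
    (i j : ι) : columnWeights A a i / columnWeights A a j = A i a / A j a :=
  div_div_div_cancel_right₀ hA _ _

end ColumnWeights

section PairwiseComparison

variable {n : ℕ} {A Ahat : Matrix (Fin n) (Fin n) ℝ} {i j k : Fin n} {α : ℝ}

theorem isPCM_of_div {w : Fin n → ℝ} (hw : ∀ i, 0 < w i) :
    IsPCM (Matrix.of fun i j => w i / w j) :=
  ⟨fun i j => div_pos (hw i) (hw j), fun _ _ => (one_div_div _ _).symm⟩

theorem IsPCM.apply_self_s12 (hA : IsPCM A) (i : Fin n) : A i i = 1 := by
  have hsq : A i i * A i i = 1 := (eq_div_iff (hA.1 i i).ne').mp (hA.2 i i)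
  nlinarith [hA.1 i i]

theorem IsPCM.sum_col_ne_zero (hA : IsPCM A) (a : Fin n) : ∑ k, A k a ≠ 0 :=
  (sum_pos (fun k _ => hA.1 k a) ⟨a, mem_univ a⟩).ne'

theorem IsConsistent.apply_eq_div (hC : IsConsistent A) (hA : IsPCM A) (a i j : Fin n) :
    A i j = A i a / A j a := by
  rw [hC i a j, hA.2 j a, mul_one_div]

theorem TriadTransform.apply_self_s12 (h : TriadTransform A Ahat i j k α) (l : Fin n) :
    Ahat l l = A l l := by
  obtain ⟨hij, hjk, hik, -, -, -, -, -, -, -, hrest⟩ := h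
  apply hrest <;> grind

theorem exists_triadTransform (A : Matrix (Fin n) (Fin n) ℝ) (hij : i ≠ j) (hjk : j ≠ k)
    (hik : i ≠ k) (hα : 0 < α) : ∃ Ahat, TriadTransform A Ahat i j k α := by
  let cycle : Finset (Fin n × Fin n) := {(i, j), (j, k), (k, i)}
  let Ahat : Matrix (Fin n) (Fin n) ℝ := Matrix.of fun l m =>
    if (l, m) ∈ cycle then α * A l m else if (m, l) ∈ cycle then A l m / α else A l m
  refine ⟨Ahat, hij, hjk, hik, hα, ?_⟩
  grind [Matrix.of_apply]

theorem TriadTransform.columnWeights_ne (h : TriadTransform A Ahat i j k α) (hA : IsPCM A)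
    (hα : α ≠ 1) : columnWeights A i ≠ columnWeights Ahat i := by
  intro heq
  have hdiag : Ahat i i = 1 := (h.apply_self_s12 i).trans (hA.apply_self_s12 i)
  have hAhat : Ahat j i = A j i / α := h.2.2.2.2.2.1
  have hsum : ∑ l, Ahat l i = ∑ l, A l i := by
    have hi := congrFun heq i
    simpa only [columnWeights, hA.apply_self_s12 i, hdiag, one_div, inv_inj, eq_comm] using hi
  have hentry : A j i = A j i / α := by
    have hj := congrFun heq j
    rwa [columnWeights, columnWeights, hsum, div_left_inj' (hA.sum_col_ne_zero i), hAhat] at hj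
  have hα0 : α ≠ 0 := h.2.2.2.1.ne'
  exact hα ((mul_eq_left₀ (hA.1 j i).ne').mp ((eq_div_iff hα0).mp hentry))

end PairwiseComparison

theorem exists_CO_not_IT {n : ℕ} (hn : 3 ≤ n) :
    ∃ f : Matrix (Fin n) (Fin n) ℝ → (Fin n → ℝ),
      (∀ A, IsPCM A → (∀ i, 0 < f A i) ∧ ∑ i, f A i = 1) ∧
      (∀ A, IsPCM A → IsConsistent A → ∀ i j, f A i / f A j = A i j) ∧
      ¬ (∀ A Ahat : Matrix (Fin n) (Fin n) ℝ, IsPCM A →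
        (∃ (i j k : Fin n) (α : ℝ), TriadTransform A Ahat i j k α) →
        f A = f Ahat) := by
  obtain ⟨i, j, k, hij, hik, hjk⟩ : ∃ i j k : Fin n, i ≠ j ∧ i ≠ k ∧ j ≠ k :=
    Fintype.two_lt_card_iff.mp (hn.trans_eq (Fintype.card_fin n).symm)
  refine ⟨fun A => columnWeights A i, fun A hA => ?_, fun A hA hC l m => ?_, fun hIT => ?_⟩
  · exact ⟨columnWeights_pos fun l => hA.1 l i, sum_columnWeights (hA.sum_col_ne_zero i)⟩
  · rw [columnWeights_div_columnWeights (hA.sum_col_ne_zero i), ← hC.apply_eq_div hA]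
  · have hA := isPCM_of_div (w := fun _ : Fin n => 1) fun _ => one_pos
    obtain ⟨Ahat, hAhat⟩ := exists_triadTransform _ hij hjk hik two_pos
    exact hAhat.columnWeights_ne hA (OfNat.ofNat_ne_one 2) (hIT _ Ahat hA ⟨i, j, k, 2, hAhat⟩)
end
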